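/- Fix data points z₁,…,z_N ∈ ℝ^D, means μ₁,…,μ_K ∈ ℝ^D and positive definite symmetric covariances Σ₁,…,Σ_K, and view the Gaussian-mixture log-likelihood L(w) = Σ_{n=1}^N ln( Σ_{k=1}^K w_k N(z_n; μ_k, Σ_k) ) as a function of the weight vector w on the open set where all w_k > 0. Suppose w with all w_k > 0 is a stationary point of the Lagrangian w ↦ L(w) + Λ( Σ_{k=1}^K w_k − 1 ) for some Λ ∈ ℝ, together with the constraint Σ_{k=1}^K w_k = 1. Then Λ = −N and for every k, w_k = (1/N) Σ_{n=1}^N γ_{n,k}, where γ_{n,k} are the responsibilities computed at w. -/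

import Mathlib

/-!
Write `g n k` for the density of the `k`-th component at the `n`-th point; every `g n k` is
positive, so `L` is differentiable at `w` and stationarity reads
`∑ n, g n k / ∑ j, w j * g n j = -Λ` for each `k`. Multiplying by `w k` gives
`∑ n, γ n k = -Λ * w k`. Summing over `k`, the left side is `N` (responsibilities of each point
sum to one) and the right side is `-Λ`, which determines `Λ` and then `w k`.
-/

open Matrix Real

/-- The multivariate Gaussian density on `ℝ^D` with mean `μ` and covariance `S`:
`N(z; μ, S) = (2π)^{−D/2} (det S)^{−1/2} exp(−(1/2)(z − μ)ᵀ S⁻¹ (z − μ))`. -/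
noncomputable def gaussDensity {D : ℕ} (μ : Fin D → ℝ) (S : Matrix (Fin D) (Fin D) ℝ)
    (z : Fin D → ℝ) : ℝ :=
  (2 * π) ^ (-(D : ℝ) / 2) * S.det ^ (-(1 : ℝ) / 2) *
    Real.exp (-(1 / 2) * ((z - μ) ⬝ᵥ (S⁻¹ *ᵥ (z - μ))))

theorem gaussDensity_pos {D : ℕ} (μ : Fin D → ℝ) {S : Matrix (Fin D) (Fin D) ℝ}
    (hS : S.PosDef) (z : Fin D → ℝ) : 0 < gaussDensity μ S z := by
  have := hS.det_pos
  unfold gaussDensity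
  positivity

/-- The partial derivatives of the Lagrangian, for an arbitrary array `g` of component densities
at the data points. -/
theorem fderiv_lagrangian_single {N K : ℕ} (g : Fin N → Fin K → ℝ) (w : Fin K → ℝ)
    (hpos : ∀ n, 0 < ∑ j, w j * g n j) (Λ : ℝ) (k : Fin K) :
    fderiv ℝ (fun v : Fin K → ℝ =>
      (∑ n, Real.log (∑ j, v j * g n j)) + Λ * (∑ j, v j - 1)) w (Pi.single k 1) =
      (∑ n, g n k / ∑ j, w j * g n j) + Λ := by
  have hlin (n : Fin N) := HasFDerivAt.fun_sum (u := Finset.univ) fun j _ =>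
    (hasFDerivAt_apply (𝕜 := ℝ) (F' := fun _ : Fin K => ℝ) j w).mul_const (g n j)
  have hL := HasFDerivAt.fun_sum (u := Finset.univ) fun n _ => (hlin n).log (hpos n).ne'
  have hc := ((HasFDerivAt.fun_sum (u := Finset.univ) fun j _ =>
    hasFDerivAt_apply (𝕜 := ℝ) (F' := fun _ : Fin K => ℝ) j w).sub_const 1).const_mul Λ
  rw [(hL.fun_add hc).fderiv]
  simp [Pi.single_apply, div_eq_inv_mul]

/-- **EM mixing-coefficient update.**
Fix data points `z₁,…,z_N ∈ ℝ^D` (`N ≥ 1`), means `μ₁,…,μ_K ∈ ℝ^D` and positive definite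
symmetric covariances `Σ₁,…,Σ_K`, and view the Gaussian-mixture log-likelihood
`L(w) = ∑_n ln(∑_k w_k N(z_n; μ_k, Σ_k))` as a function of the weight vector `w` on the
open set where all `w_k > 0`.  Suppose `w` with all `w_k > 0` is a stationary point of the
Lagrangian `w ↦ L(w) + Λ(∑_k w_k − 1)` for some `Λ ∈ ℝ` (all partial derivatives with
respect to `w₁,…,w_K` vanish), together with the constraint `∑_k w_k = 1`.  Then
`Λ = −N` and for every `k`, `w_k = (1/N) ∑_n γ_{n,k}`, where `γ_{n,k}` are the
responsibilities computed at `w`. -/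
theorem em_weight_update (D N K : ℕ) (hN : 0 < N)
    (z : Fin N → Fin D → ℝ)
    (μ : Fin K → Fin D → ℝ) (S : Fin K → Matrix (Fin D) (Fin D) ℝ)
    (hS : ∀ k, (S k).PosDef)
    (w : Fin K → ℝ) (hw : ∀ k, 0 < w k) (hsum : ∑ k, w k = 1)
    (Λ : ℝ)
    (γ : Fin N → Fin K → ℝ)
    (hγ : ∀ n k, γ n k = w k * gaussDensity (μ k) (S k) (z n) /
        ∑ j, w j * gaussDensity (μ j) (S j) (z n))
    (L : (Fin K → ℝ) → ℝ)
    (hL : L = fun v => ∑ n, Real.log (∑ k, v k * gaussDensity (μ k) (S k) (z n)))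
    (hstat : ∀ k : Fin K,
      fderiv ℝ (fun v : Fin K → ℝ => L v + Λ * (∑ j, v j - 1)) w (Pi.single k 1) = 0) :
    Λ = -(N : ℝ) ∧ ∀ k, w k = (1 / (N : ℝ)) * ∑ n, γ n k := by
  subst hL
  have hg (n k) : 0 < gaussDensity (μ k) (S k) (z n) := gaussDensity_pos _ (hS k) _
  -- The constraint excludes `K = 0`, so the mixture density is a nonempty sum of positive terms.
  have hne : (Finset.univ : Finset (Fin K)).Nonempty :=
    Finset.nonempty_of_sum_ne_zero (hsum.trans_ne one_ne_zero)
  have hpos (n) : 0 < ∑ j, w j * gaussDensity (μ j) (S j) (z n) :=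
    Finset.sum_pos (fun j _ => mul_pos (hw j) (hg n j)) hne
  have hγw (k) : ∑ n, γ n k = -Λ * w k := by
    have h := hstat k
    rw [fderiv_lagrangian_single (fun n k => gaussDensity (μ k) (S k) (z n)) w hpos Λ k] at h
    simp only [hγ, mul_div_assoc, ← Finset.mul_sum]
    rw [eq_neg_of_add_eq_zero_left h, mul_comm]
  have hγ1 (n) : ∑ k, γ n k = 1 := by
    simp only [hγ, ← Finset.sum_div]
    exact div_self (hpos n).ne'
  have hΛ : Λ = -(N : ℝ) := by
    have h : ∑ k, ∑ n, γ n k = (N : ℝ) := by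
      rw [Finset.sum_comm]
      simp [hγ1]
    simp only [hγw, ← Finset.mul_sum, hsum] at h
    linarith
  refine ⟨hΛ, fun k => ?_⟩
  have hN' : (N : ℝ) ≠ 0 := by exact_mod_cast hN.ne'
  rw [hγw, hΛ]
  field_simp
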